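/- For every real ε > 0 there exists t₀ such that for all integers t ≥ t₀ the 4-color Ramsey number of K_t satisfies r(t;4) > 2^{(5/4 − ε)·t}; that is, there exists a coloring of the edges of the complete graph on N = ⌈2^{(5/4 − ε)·t}⌉ vertices with 4 colors containing no monochromatic clique of size t. -/

import Mathlib

open Module Finset

section Averaging

variable {ι κ X α : Type*} [Fintype ι] [Fintype κ] [Fintype X]
  [DecidableEq ι] [DecidableEq κ] [DecidableEq X]

/-- Restricting a uniformly random function along an embedding gives a uniformly random
function. -/
theorem card_filter_comp_mem_mul_le (e : ι ↪ κ) (A : Finset (ι → X)) :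
    #{f : κ → X | f ∘ e ∈ A} * Fintype.card X ^ Fintype.card ι ≤
      #A * Fintype.card X ^ Fintype.card κ := by
  classical
  rw [← Fintype.card_fun, ← Fintype.card_fun, ← card_univ, ← card_univ, ← card_product,
    ← card_product]
  refine card_le_card_of_injOn (fun p => (p.1 ∘ e, Function.extend e p.2 p.1)) ?_ ?_
  · intro p hp
    simpa using hp
  · rintro ⟨f, φ⟩ - ⟨f', φ'⟩ - h
    obtain ⟨h₁, h₂⟩ := Prod.mk.inj h
    refine Prod.ext (funext fun x => ?_) (funext fun i => ?_)
    · by_cases hx : ∃ i, e i = x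
      · obtain ⟨i, rfl⟩ := hx
        exact congrFun h₁ i
      · simpa [Function.extend_apply' _ _ _ hx] using congrFun h₂ x
    · simpa [e.injective.extend_apply] using congrFun h₂ (e i)

/-- Some function is at most as bad as the average one. -/
theorem exists_card_filter_comp_mem_mul_le [Nonempty X] (E : Finset α) (e : α → ι ↪ κ)
    (A : Finset (ι → X)) :
    ∃ f : κ → X, #{a ∈ E | f ∘ e a ∈ A} * Fintype.card X ^ Fintype.card ι ≤ #E * #A := by
  classical
  by_contra! H
  have hlt : ∑ _f : κ → X, #E * #A <
      ∑ f : κ → X, #{a ∈ E | f ∘ e a ∈ A} * Fintype.card X ^ Fintype.card ι :=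
    sum_lt_sum_of_nonempty univ_nonempty fun f _ => H f
  refine hlt.not_ge ?_
  rw [← sum_mul]
  simp_rw [card_filter]
  rw [sum_comm, sum_mul]
  simp_rw [← card_filter]
  refine (sum_le_sum fun a _ => card_filter_comp_mem_mul_le (e a) A).trans ?_
  simp only [sum_const, card_univ, Fintype.card_fun, smul_eq_mul]
  exact le_of_eq (by ring)

end Averaging

theorem finrank_sup_span_singleton_of_notMem {K V : Type*} [Field K] [AddCommGroup V] [Module K V]
    [FiniteDimensional K V] {W : Submodule K V} {v : V} (hv : v ∉ W) :
    finrank K ↥(W ⊔ Submodule.span K {v}) = finrank K W + 1 := by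
  have h := Submodule.finrank_sup_add_finrank_inf_eq W (Submodule.span K {v})
  have hv0 : v ≠ 0 := fun h0 => hv (h0 ▸ W.zero_mem)
  have hd : W ⊓ Submodule.span K {v} = ⊥ :=
    disjoint_iff.mp ((Submodule.disjoint_span_singleton' hv0).mpr hv)
  rwa [hd, finrank_bot, finrank_span_singleton hv0, add_zero] at h

section Isotropic

variable {E : Type*} [AddCommGroup E] [Module (ZMod 2) E]

theorem sup_span_singleton_le_orthogonal {B : LinearMap.BilinForm (ZMod 2) E} (hA : B.IsAlt)
    {W : Submodule (ZMod 2) E} (hW : W ≤ B.orthogonal W) {v : E} (hv : v ∈ B.orthogonal W) :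
    W ⊔ Submodule.span (ZMod 2) {v} ≤ B.orthogonal (W ⊔ Submodule.span (ZMod 2) {v}) := by
  intro x hx u hu
  obtain ⟨y, hy, z, hz, rfl⟩ := Submodule.mem_sup.mp hu
  obtain ⟨a, rfl⟩ := Submodule.mem_span_singleton.mp hz
  obtain ⟨y', hy', z', hz', rfl⟩ := Submodule.mem_sup.mp hx
  obtain ⟨b, rfl⟩ := Submodule.mem_span_singleton.mp hz'
  have h₁ : B y y' = 0 := hW hy' y hy
  have h₂ : B y v = 0 := hv y hy
  have h₃ : B v y' = 0 := hA.isRefl _ _ (hv y' hy')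
  simp [h₁, h₂, h₃, hA.self_eq_zero v]

/-- An even number of vectors with all pairwise products equal to `1` is linearly independent. -/
theorem linearIndependent_of_pairwise_eq_one {B : LinearMap.BilinForm (ZMod 2) E} (hA : B.IsAlt)
    {n : ℕ} (hn : Even n) {v : Fin n → E} (hv : ∀ i j, i ≠ j → B (v i) (v j) = 1) :
    LinearIndependent (ZMod 2) v := by
  rw [Fintype.linearIndependent_iff]
  intro c hc
  have hcS : ∀ j, c j = ∑ i, c i := by
    intro j
    have h₀ : ∑ i, c i * B (v i) (v j) = 0 := by
      have := congrArg (fun x => B x (v j)) hc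
      simpa using this
    rw [← add_sum_erase _ _ (mem_univ j), hA.self_eq_zero, mul_zero, zero_add] at h₀
    rw [← add_sum_erase _ c (mem_univ j), left_eq_add, ← h₀]
    refine sum_congr rfl fun i hi => ?_
    rw [hv i j (ne_of_mem_erase hi), mul_one]
  have hS : ∑ i, c i = 0 := by
    rw [sum_congr rfl fun j _ => hcS j]
    have : (n : ZMod 2) = 0 := (ZMod.natCast_eq_zero_iff_even).mpr hn
    simp [this]
  intro j
  rw [hcS j, hS]

variable [Fintype E]

theorem card_filter_mem_submodule (W : Submodule (ZMod 2) E) [DecidablePred (· ∈ W)] :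
    #{v : E | v ∈ W} = 2 ^ finrank (ZMod 2) W := by
  rw [← Fintype.card_subtype]
  simpa using Module.card_eq_pow_finrank (K := ZMod 2) (V := W)

open Classical in
/-- The tuples of length `s` that are pairwise orthogonal, and orthogonal to `W`. -/
noncomputable def isotropicTuples (B : LinearMap.BilinForm (ZMod 2) E)
    (W : Submodule (ZMod 2) E) (s : ℕ) : Finset (Fin s → E) :=
  {w | (∀ i j, B (w i) (w j) = 0) ∧ ∀ i, w i ∈ B.orthogonal W}

theorem mem_isotropicTuples {B : LinearMap.BilinForm (ZMod 2) E}
    {W : Submodule (ZMod 2) E} {s : ℕ} {w : Fin s → E} :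
    w ∈ isotropicTuples B W s ↔
      (∀ i j, B (w i) (w j) = 0) ∧ ∀ i, w i ∈ B.orthogonal W := by
  simp [isotropicTuples]

theorem tail_mem_isotropicTuples {B : LinearMap.BilinForm (ZMod 2) E}
    {W : Submodule (ZMod 2) E} {s : ℕ} {w : Fin (s + 1) → E}
    (hw : w ∈ isotropicTuples B W (s + 1)) :
    Fin.tail w ∈ isotropicTuples B (W ⊔ Submodule.span (ZMod 2) {w 0}) s := by
  rw [mem_isotropicTuples] at hw ⊢
  refine ⟨fun i j => hw.1 _ _, fun i => ?_⟩
  rw [LinearMap.BilinForm.mem_orthogonal_iff]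
  intro u hu
  obtain ⟨y, hy, z, hz, rfl⟩ := Submodule.mem_sup.mp hu
  obtain ⟨a, rfl⟩ := Submodule.mem_span_singleton.mp hz
  have h₁ : B y (w i.succ) = 0 := hw.2 i.succ y hy
  simp [Fin.tail, h₁, hw.1 0 i.succ]

open Classical in
theorem card_isotropicTuples_succ_le (B : LinearMap.BilinForm (ZMod 2) E)
    (W : Submodule (ZMod 2) E) (s : ℕ) :
    #(isotropicTuples B W (s + 1)) ≤
      ∑ v : E with v ∈ B.orthogonal W,
        #(isotropicTuples B (W ⊔ Submodule.span (ZMod 2) {v}) s) := by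
  rw [card_eq_sum_card_fiberwise (f := fun w => w 0)
    (t := {v : E | v ∈ B.orthogonal W}) fun w hw => by
      simpa using (mem_isotropicTuples.mp hw).2 0]
  refine sum_le_sum fun v _ => card_le_card_of_injOn Fin.tail ?_ ?_
  · intro w hw
    obtain ⟨hwI, rfl⟩ := mem_filter.mp hw
    exact tail_mem_isotropicTuples hwI
  · intro w hw w' hw' h
    have hv : w 0 = w' 0 := (mem_filter.mp hw).2.trans (mem_filter.mp hw').2.symm
    rw [← Fin.cons_self_tail w, ← Fin.cons_self_tail w', h, hv]

theorem card_isotropicTuples_le {B : LinearMap.BilinForm (ZMod 2) E} (hB : B.Nondegenerate)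
    (hA : B.IsAlt) {h : ℕ} (hE : finrank (ZMod 2) E = 2 * h) (s : ℕ) :
    ∀ (d : ℕ) (W : Submodule (ZMod 2) E), W ≤ B.orthogonal W → finrank (ZMod 2) W + d = h →
      #(isotropicTuples B W s) ≤ 2 ^ (s + s * h + (d + 1).choose 2) := by
  classical
  induction s with
  | zero =>
    intro d W _ _
    exact (card_le_one_of_subsingleton _).trans Nat.one_le_two_pow
  | succ s ih =>
    intro d W hW hd
    have horth := B.finrank_orthogonal hB W
    refine (card_isotropicTuples_succ_le B W s).trans ?_
    rw [← sum_filter_add_sum_filter_not _ (· ∈ W)]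
    have hin : ∑ v ∈ ({v : E | v ∈ B.orthogonal W} : Finset E) with v ∈ W,
        #(isotropicTuples B (W ⊔ Submodule.span (ZMod 2) {v}) s) ≤
          2 ^ (s + (s + 1) * h + (d + 1).choose 2) := by
      refine (sum_le_card_nsmul _ _ (2 ^ (s + s * h + (d + 1).choose 2)) ?_).trans ?_
      · intro v hv
        rw [sup_eq_left.mpr ((Submodule.span_singleton_le_iff_mem v W).mpr (mem_filter.mp hv).2)]
        exact ih d W hW hd
      · have hc : #{v ∈ ({v : E | v ∈ B.orthogonal W} : Finset E) | v ∈ W} ≤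
            2 ^ finrank (ZMod 2) W := by
          rw [← card_filter_mem_submodule W]
          exact card_le_card (filter_subset_filter _ (subset_univ _))
        refine (Nat.mul_le_mul_right _ hc).trans ?_
        rw [← pow_add]
        exact Nat.pow_le_pow_right two_pos (by linarith)
    have hout : ∑ v ∈ ({v : E | v ∈ B.orthogonal W} : Finset E) with v ∉ W,
        #(isotropicTuples B (W ⊔ Submodule.span (ZMod 2) {v}) s) ≤
          2 ^ (s + (s + 1) * h + (d + 1).choose 2) := by
      cases d with
      | zero =>
        have hWW : W = B.orthogonal W :=
          Submodule.eq_of_le_of_finrank_eq hW (by omega)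
        rw [filter_eq_empty_iff.mpr, sum_empty]
        · exact Nat.zero_le _
        · intro v hv hvW
          rw [mem_filter, ← hWW] at hv
          exact hvW hv.2
      | succ d =>
        refine (sum_le_card_nsmul _ _ (2 ^ (s + s * h + (d + 1).choose 2)) ?_).trans ?_
        · intro v hv
          simp only [mem_filter, mem_univ, true_and] at hv
          refine ih d _ (sup_span_singleton_le_orthogonal hA hW hv.1) ?_
          rw [finrank_sup_span_singleton_of_notMem hv.2]
          omega
        · have hc : #{v ∈ ({v : E | v ∈ B.orthogonal W} : Finset E) | v ∉ W} ≤
              2 ^ (h + (d + 1)) := by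
            refine (card_filter_le _ _).trans ?_
            rw [card_filter_mem_submodule]
            exact Nat.pow_le_pow_right two_pos (by omega)
          refine (Nat.mul_le_mul_right _ hc).trans ?_
          rw [← pow_add]
          refine Nat.pow_le_pow_right two_pos ?_
          have hch : (d + 1 + 1).choose 2 = (d + 1) + (d + 1).choose 2 := by
            rw [Nat.choose_succ_succ' (d + 1) 1, Nat.choose_one_right]
          rw [hch]
          linarith
    calc _ ≤ _ := add_le_add hin hout
      _ = _ := by ring

end Isotropic

/-- The standard symplectic form over the field with two elements. -/
noncomputable def symplecticForm (h : ℕ) :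
    LinearMap.BilinForm (ZMod 2) (Fin h ⊕ Fin h → ZMod 2) :=
  Matrix.toBilin' (Matrix.J (Fin h) (ZMod 2))

theorem symplecticForm_nondegenerate (h : ℕ) : (symplecticForm h).Nondegenerate :=
  LinearMap.BilinForm.nondegenerate_toBilin'_of_det_ne_zero' _
    (Matrix.isUnit_det_J (Fin h) (ZMod 2)).ne_zero

theorem symplecticForm_isAlt (h : ℕ) : (symplecticForm h).IsAlt := by
  intro x
  rw [symplecticForm, Matrix.toBilin'_apply']
  simp [Matrix.J, Matrix.fromBlocks_mulVec, dotProduct, Matrix.neg_mulVec, mul_comm,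
    CharTwo.add_self_eq_zero]

theorem card_monochromatic_le {s : ℕ} (hs : 2 ≤ s) :
    #{φ : Sym2 (Fin s) → Bool | ∃ c, ∀ i j, i ≠ j → φ s(i, j) = c} ≤ 2 ^ (s + 1) := by
  have hcard : Fintype.card (Bool × (Fin s → Bool)) = 2 ^ (s + 1) := by
    simp [pow_succ, mul_comm]
  rw [← hcard, ← card_univ]
  have h01 : (⟨0, by omega⟩ : Fin s) ≠ ⟨1, by omega⟩ := by simp
  refine card_le_card_of_injOn
    (fun φ => (φ s(⟨0, by omega⟩, ⟨1, by omega⟩), fun i => φ s(i, i))) (by simp) ?_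
  intro φ hφ ψ hψ h
  obtain ⟨c, hc⟩ := (mem_filter.mp hφ).2
  obtain ⟨c', hc'⟩ := (mem_filter.mp hψ).2
  obtain ⟨h₁, h₂⟩ := Prod.mk.inj h
  rw [hc _ _ h01, hc' _ _ h01] at h₁
  funext e
  induction e using Sym2.ind with
  | _ i j =>
    by_cases hij : i = j
    · subst hij
      exact congrFun h₂ i
    · rw [hc i j hij, hc' i j hij, h₁]

/-- There are two maps to the symplectic space of dimension `2 * h` and a two-coloring of the
pairs such that no `2 * h + 2` points are isotropic under both maps and monochromatic. -/
theorem exists_maps_of_pow_lt {h N : ℕ} (hN : N ^ (2 * h + 2) * 16 < 2 ^ (5 * h ^ 2 + 2 * h)) :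
    ∃ (f : Fin N → (Fin h ⊕ Fin h → ZMod 2) × (Fin h ⊕ Fin h → ZMod 2))
      (g : Sym2 (Fin N) → Bool), ∀ e : Fin (2 * h + 2) ↪ Fin N,
        (∀ i j, symplecticForm h (f (e i)).1 (f (e j)).1 = 0) →
        (∀ i j, symplecticForm h (f (e i)).2 (f (e j)).2 = 0) →
        ¬ ∃ c, ∀ i j, i ≠ j → g s(e i, e j) = c := by
  classical
  set s := 2 * h + 2 with hs
  set T := isotropicTuples (symplecticForm h) ⊥ s with hT
  have hTcard : #T ≤ 2 ^ (s + s * h + (h + 1).choose 2) :=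
    card_isotropicTuples_le (symplecticForm_nondegenerate h) (symplecticForm_isAlt h)
      (by simp [two_mul]) s h ⊥ bot_le (by simp)
  let A : Finset (Fin s → (Fin h ⊕ Fin h → ZMod 2) × (Fin h ⊕ Fin h → ZMod 2)) :=
    {w | Prod.fst ∘ w ∈ T ∧ Prod.snd ∘ w ∈ T}
  have hAcard : #A ≤ #T * #T := by
    rw [← card_product]
    refine card_le_card_of_injOn (fun w => (Prod.fst ∘ w, Prod.snd ∘ w)) ?_ ?_
    · intro w hw
      simpa [A] using hw
    · intro w _ w' _ hww
      obtain ⟨h₁, h₂⟩ := Prod.mk.inj hww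
      exact funext fun i => Prod.ext (congrFun h₁ i) (congrFun h₂ i)
  obtain ⟨f, hf⟩ := exists_card_filter_comp_mem_mul_le
    (univ : Finset (Fin s ↪ Fin N)) id A
  set bad : Finset (Fin s ↪ Fin N) := {e | f ∘ id e ∈ A} with hbad
  obtain ⟨g, hg⟩ := exists_card_filter_comp_mem_mul_le bad
    (fun e => (⟨Sym2.map e, Sym2.map.injective e.injective⟩ : Sym2 (Fin s) ↪ Sym2 (Fin N)))
    ({φ : Sym2 (Fin s) → Bool | ∃ c, ∀ i j, i ≠ j → φ s(i, j) = c} : Finset _)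
  refine ⟨f, g, fun e h₁ h₂ h₃ => hN.not_ge ?_⟩
  have hebad : e ∈ bad := by
    simp only [hbad, A, hT, mem_filter, mem_univ, true_and, mem_isotropicTuples,
      LinearMap.BilinForm.orthogonal_bot, Submodule.mem_top, implies_true, and_true]
    exact ⟨h₁, h₂⟩
  have hE : #(univ : Finset (Fin s ↪ Fin N)) ≤ N ^ s := by
    rw [card_univ, Fintype.card_embedding_eq]
    simpa using Nat.descFactorial_le_pow N s
  have hbadcard : #bad * 2 ^ (4 * h * s) ≤
      N ^ s * 2 ^ (2 * (s + s * h + (h + 1).choose 2)) := by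
    have hX : Fintype.card ((Fin h ⊕ Fin h → ZMod 2) × (Fin h ⊕ Fin h → ZMod 2)) ^
        Fintype.card (Fin s) = 2 ^ (4 * h * s) := by
      rw [pow_mul]
      simp only [Fintype.card_prod, Fintype.card_fun, Fintype.card_sum, Fintype.card_fin,
        ZMod.card, ← pow_add]
      ring_nf
    rw [hX] at hf
    refine hf.trans (Nat.mul_le_mul hE (hAcard.trans ((Nat.mul_le_mul hTcard hTcard).trans ?_)))
    rw [← pow_add, two_mul]
  have hsym : 2 ^ ((s + 1).choose 2) ≤ #bad * 2 ^ (s + 1) := by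
    rw [Sym2.card, Fintype.card_fin, Fintype.card_bool] at hg
    exact (Nat.le_mul_of_pos_left _ (card_pos.mpr ⟨e, by simpa [hebad] using h₃⟩)).trans
      (hg.trans (Nat.mul_le_mul_left _ (card_monochromatic_le (by omega))))
  have hch₁ : (s + 1).choose 2 = 2 * h ^ 2 + 5 * h + 3 := by
    rw [Nat.choose_two_right, hs]
    refine Nat.div_eq_of_eq_mul_left two_pos ?_
    simp only [Nat.add_sub_cancel]
    ring
  have hch₂ : 2 * (h + 1).choose 2 = h ^ 2 + h := by
    rw [Nat.choose_two_right, Nat.add_sub_cancel,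
      Nat.mul_div_cancel' (by simpa [mul_comm] using (Nat.even_mul_succ_self h).two_dvd)]
    ring
  have hkey : 2 ^ (5 * h ^ 2 + 2 * h) * 2 ^ (5 * h ^ 2 + 11 * h + 3) ≤
      N ^ s * 16 * 2 ^ (5 * h ^ 2 + 11 * h + 3) := by
    calc 2 ^ (5 * h ^ 2 + 2 * h) * 2 ^ (5 * h ^ 2 + 11 * h + 3)
        = 2 ^ ((s + 1).choose 2) * 2 ^ (4 * h * s) := by
          rw [← pow_add, ← pow_add, hch₁, hs]
          ring_nf
      _ ≤ #bad * 2 ^ (s + 1) * 2 ^ (4 * h * s) := Nat.mul_le_mul_right _ hsym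
      _ = #bad * 2 ^ (4 * h * s) * 2 ^ (s + 1) := by ring
      _ ≤ N ^ s * 2 ^ (2 * (s + s * h + (h + 1).choose 2)) * 2 ^ (s + 1) :=
          Nat.mul_le_mul_right _ hbadcard
      _ = N ^ s * 2 ^ (4 + (5 * h ^ 2 + 11 * h + 3)) := by
          rw [mul_assoc, ← pow_add, mul_add 2, hch₂, hs]
          ring_nf
      _ = N ^ s * 16 * 2 ^ (5 * h ^ 2 + 11 * h + 3) := by
          rw [pow_add]
          ring
  exact Nat.le_of_mul_le_mul_right hkey (by positivity)

theorem zmod_two_eq_zero_of_ne_one {a : ZMod 2} (ha : a ≠ 1) : a = 0 := by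
  revert a
  decide

theorem not_pairwise_symplecticForm_eq_one {h : ℕ} (v : Fin (2 * h + 2) → Fin h ⊕ Fin h → ZMod 2) :
    ¬ ∀ i j, i ≠ j → symplecticForm h (v i) (v j) = 1 := by
  intro hv
  have hle := (linearIndependent_of_pairwise_eq_one (symplecticForm_isAlt h)
    ⟨h + 1, by ring⟩ hv).fintype_card_le_finrank
  simp at hle
  omega

theorem exists_fourColoring_of_pow_lt {h N : ℕ}
    (hN : N ^ (2 * h + 2) * 16 < 2 ^ (5 * h ^ 2 + 2 * h)) :
    ∃ χ : Fin N → Fin N → Fin 4, (∀ x y, χ x y = χ y x) ∧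
      ∀ (e : Fin (2 * h + 2) ↪ Fin N) (c : Fin 4), ¬ ∀ i j, i ≠ j → χ (e i) (e j) = c := by
  obtain ⟨f, g, hfg⟩ := exists_maps_of_pow_lt hN
  have hsymm : ∀ x y, symplecticForm h x y = symplecticForm h y x := fun x y => by
    rw [← (symplecticForm_isAlt h).neg_eq, ZMod.neg_eq_self_mod_two]
  refine ⟨fun x y =>
    if symplecticForm h (f x).1 (f y).1 = 1 then 0
    else if symplecticForm h (f x).2 (f y).2 = 1 then 1
    else if g s(x, y) = true then 2 else 3, fun x y => ?_, fun e c hc => ?_⟩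
  · simp only [hsymm (f x).1, hsymm (f x).2, Sym2.eq_swap (a := x)]
  · by_cases hc0 : c = 0
    · refine not_pairwise_symplecticForm_eq_one (fun i => (f (e i)).1) fun i j hij => ?_
      have := hc i j hij
      grind
    by_cases hc1 : c = 1
    · refine not_pairwise_symplecticForm_eq_one (fun i => (f (e i)).2) fun i j hij => ?_
      have := hc i j hij
      grind
    refine hfg e (fun i j => ?_) (fun i j => ?_) ⟨decide (c = 2), fun i j hij => ?_⟩
    · by_cases hij : i = j
      · rw [hij, (symplecticForm_isAlt h).self_eq_zero]
      · have := hc i j hij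
        exact zmod_two_eq_zero_of_ne_one (by grind)
    · by_cases hij : i = j
      · rw [hij, (symplecticForm_isAlt h).self_eq_zero]
      · have := hc i j hij
        exact zmod_two_eq_zero_of_ne_one (by grind)
    · have := hc i j hij
      grind

theorem ceil_two_rpow_pow_lt {a : ℝ} {h : ℕ} (hh : 2 ≤ h) (ha : a ≤ 5 / 2 * h - 3) :
    ⌈(2 : ℝ) ^ a⌉₊ ^ (2 * h + 2) * 16 < 2 ^ (5 * h ^ 2 + 2 * h) := by
  have hh' : (2 : ℝ) ≤ h := by exact_mod_cast hh
  have hN : (⌈(2 : ℝ) ^ a⌉₊ : ℝ) ≤ 2 ^ (5 / 2 * (h : ℝ) - 2) := by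
    have h₁ : (2 : ℝ) ^ a ≤ 2 ^ (5 / 2 * (h : ℝ) - 3) :=
      Real.rpow_le_rpow_of_exponent_le one_le_two ha
    have h₂ : (1 : ℝ) ≤ 2 ^ (5 / 2 * (h : ℝ) - 3) :=
      Real.one_le_rpow one_le_two (by linarith)
    have h₃ : (2 : ℝ) ^ (5 / 2 * (h : ℝ) - 2) = 2 ^ (5 / 2 * (h : ℝ) - 3) * 2 := by
      rw [← Real.rpow_add_one two_ne_zero]
      ring_nf
    have h₄ := (Nat.ceil_lt_add_one (Real.rpow_nonneg zero_le_two a)).le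
    linarith
  have hlt : (⌈(2 : ℝ) ^ a⌉₊ : ℝ) ^ (2 * h + 2) * 16 < 2 ^ (5 * h ^ 2 + 2 * h) := by
    calc (⌈(2 : ℝ) ^ a⌉₊ : ℝ) ^ (2 * h + 2) * 16
        ≤ ((2 : ℝ) ^ (5 / 2 * (h : ℝ) - 2)) ^ (2 * h + 2) * 2 ^ (4 : ℝ) := by
          refine mul_le_mul (pow_le_pow_left₀ (Nat.cast_nonneg _) hN _) ?_ (by norm_num)
            (by positivity)
          norm_num
      _ = (2 : ℝ) ^ (5 * (h : ℝ) ^ 2 + h) := by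
          rw [← Real.rpow_natCast, ← Real.rpow_mul zero_le_two, ← Real.rpow_add two_pos]
          push_cast
          ring_nf
      _ < (2 : ℝ) ^ (5 * (h : ℝ) ^ 2 + 2 * h) :=
          Real.rpow_lt_rpow_of_exponent_lt one_lt_two (by linarith)
      _ = 2 ^ (5 * h ^ 2 + 2 * h) := by
          rw [← Real.rpow_natCast 2 (5 * h ^ 2 + 2 * h)]
          push_cast
          rfl
  exact_mod_cast hlt

/-- For every `ε > 0` there is `t₀` such that for all `t ≥ t₀`, the 4-color Ramsey number
satisfies `r(t;4) > 2^{(5/4 - ε) t}`: there is a 4-coloring of the edges of the complete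
graph on `⌈2^{(5/4 - ε) t}⌉` vertices with no monochromatic clique of size `t`. -/
theorem four_color_ramsey_lower_bound (ε : ℝ) (hε : 0 < ε) :
    ∃ t₀ : ℕ, ∀ t : ℕ, t₀ ≤ t →
      ∃ χ : Fin (⌈(2 : ℝ) ^ ((5 / 4 - ε) * t)⌉₊) →
            Fin (⌈(2 : ℝ) ^ ((5 / 4 - ε) * t)⌉₊) → Fin 4,
        (∀ x y, χ x y = χ y x) ∧
        ¬ ∃ (S : Finset (Fin (⌈(2 : ℝ) ^ ((5 / 4 - ε) * t)⌉₊))) (c : Fin 4),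
            S.card = t ∧ ∀ x ∈ S, ∀ y ∈ S, x ≠ y → χ x y = c := by
  refine ⟨max 6 ⌈7 / ε⌉₊, fun t ht => ?_⟩
  have ht6 : 6 ≤ t := (le_max_left _ _).trans ht
  have htε : 7 ≤ t * ε :=
    (div_le_iff₀ hε).mp (Nat.ceil_le.mp ((le_max_right _ _).trans ht))
  obtain ⟨h, hh, hht, hth⟩ : ∃ h, 2 ≤ h ∧ 2 * h + 2 ≤ t ∧ t ≤ 2 * h + 3 :=
    ⟨(t - 2) / 2, by omega, by omega, by omega⟩
  have hth' : (t : ℝ) ≤ 2 * h + 3 := by exact_mod_cast hth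
  obtain ⟨χ, hsymm, hχ⟩ := exists_fourColoring_of_pow_lt
    (ceil_two_rpow_pow_lt (a := (5 / 4 - ε) * t) hh (by nlinarith))
  refine ⟨χ, hsymm, ?_⟩
  rintro ⟨S, c, hS, hc⟩
  let e := (Fin.castLEEmb hht).trans (S.orderEmbOfFin hS).toEmbedding
  exact hχ e c fun i j hij => hc _ (S.orderEmbOfFin_mem hS _) _ (S.orderEmbOfFin_mem hS _)
    (e.injective.ne hij)
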